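/- For every integer k ≥ 0: (v_{k−ℓ} − r_{k−ℓ}) + (v_{k−ℓ+1} − r_{k−ℓ+1}) ≤ (m_k − b_k) + (m_{k−ℓ+1} − b_{k−ℓ+1}). -/

import Mathlib

open LinearMap Module

noncomputable section

namespace ConeMorse

variable (A : ℤ → Type) [∀ i, AddCommGroup (A i)] [∀ i, Module ℝ (A i)]

/-- Transport along an equality of indices. -/
def lcast {m k : ℤ} (h : m = k) : A m →ₗ[ℝ] A k where
  toFun x := h ▸ x
  map_add' x y := by subst h; rfl
  map_smul' c x := by subst h; rfl

variable (d : ∀ i, A i →ₗ[ℝ] A (i + 1))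

/-- Cocycles in degree `i`. -/
def cocycles (i : ℤ) : Submodule ℝ (A i) := ker (d i)

/-- Coboundaries in degree `i`: the image of `d : A^{i-1} → A^i`. -/
def cobound (i : ℤ) : Submodule ℝ (A i) :=
  range ((lcast A (show i - 1 + 1 = i by ring)).comp (d (i - 1)))

/-- Cohomology in degree `i`: cocycles modulo coboundaries. -/
abbrev Hcoh (i : ℤ) :=
  cocycles A d i ⧸ Submodule.comap (cocycles A d i).subtype (cobound A d i)

section OneComplex

variable (ℓ : ℤ) (φ : ∀ i, A i →ₗ[ℝ] A (i + ℓ))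

/-- The cone differential `∂_C (a, b) = (∂ a + φ b, (−1)^{ℓ−1} ∂ b)` on
`Cone^i(φ) = A^i ⊕ A^{i−ℓ+1}`. -/
def coneD (i : ℤ) : (A i × A (i - ℓ + 1)) →ₗ[ℝ] (A (i + 1) × A (i + 1 - ℓ + 1)) :=
  LinearMap.prod
    ((d i).comp (LinearMap.fst ℝ (A i) (A (i - ℓ + 1))) +
      (lcast A (show i - ℓ + 1 + ℓ = i + 1 by ring)).comp
        ((φ (i - ℓ + 1)).comp (LinearMap.snd ℝ (A i) (A (i - ℓ + 1)))))
    (((-1 : ℝ) ^ (ℓ - 1)) •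
      ((lcast A (show i - ℓ + 1 + 1 = i + 1 - ℓ + 1 by ring)).comp
        ((d (i - ℓ + 1)).comp (LinearMap.snd ℝ (A i) (A (i - ℓ + 1))))))

variable [∀ i, FiniteDimensional ℝ (A i)]

/-- `m_k`: the dimension of the cochain group in degree `k`. -/
def mnum (k : ℤ) : ℕ := finrank ℝ (A k)

/-- `b_k`: the dimension of the cohomology in degree `k`. -/
def bnum (k : ℤ) : ℕ := finrank ℝ (Hcoh A d k)

/-- `v_k`: the rank of `φ : A^k → A^{k+ℓ}`. -/
def vnum (k : ℤ) : ℕ := finrank ℝ (range (φ k))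

/-- `r_k`: the rank of the induced map `[φ] : H^k → H^{k+ℓ}`, computed as the dimension of
`φ(Z^k)/(φ(Z^k) ∩ B^{k+ℓ})`. -/
def rnum (k : ℤ) : ℕ :=
  finrank ℝ ((Submodule.map (φ k) (cocycles A d k)) ⧸
    Submodule.comap (Submodule.map (φ k) (cocycles A d k)).subtype (cobound A d (k + ℓ)))

/-- `b^φ_k`: the dimension of the cone cohomology in degree `k`. -/
def bphi (k : ℤ) : ℕ :=
  finrank ℝ (Hcoh (fun i => A i × A (i - ℓ + 1)) (coneD A d ℓ φ) k)

end OneComplex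

end ConeMorse

open ConeMorse

/-!
Let `ρ_k` be the rank of `∂ : C^k → C^{k+1}`. Rank-nullity gives `m_k - b_k = ρ_k + ρ_{k-1}`.
Passing from `φ(C^k)` to `φ(Z^k)` costs at most `dim (C^k / Z^k) = ρ_k` dimensions, and passing from
`φ(Z^k)` to its quotient by the coboundaries costs at most `dim B^{k+ℓ} = ρ_{k+ℓ-1}`, so
`v_k - r_k ≤ ρ_k + ρ_{k+ℓ-1}`. Summed over the two degrees on each side, both bounds equal
`ρ_{k-ℓ} + ρ_{k-1} + ρ_{k-ℓ+1} + ρ_k`.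
-/

namespace ConeMorse

section LinearAlgebra

variable {K V W U : Type*} [DivisionRing K] [AddCommGroup V] [Module K V]
  [AddCommGroup W] [Module K W] [AddCommGroup U] [Module K U]

theorem finrank_quotient_comap_subtype_add_finrank_inf (S T : Submodule K V)
    [FiniteDimensional K S] :
    finrank K (S ⧸ T.comap S.subtype) + finrank K (S ⊓ T : Submodule K V) = finrank K S := by
  rw [← Submodule.map_comap_subtype, Submodule.finrank_map_subtype_eq]
  exact Submodule.finrank_quotient_add_finrank _

theorem finrank_le_finrank_quotient_comap_subtype_add (S T : Submodule K V)
    [FiniteDimensional K S] [FiniteDimensional K T] :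
    finrank K S ≤ finrank K (S ⧸ T.comap S.subtype) + finrank K T := by
  rw [← finrank_quotient_comap_subtype_add_finrank_inf S T]
  exact Nat.add_le_add_left (Submodule.finrank_mono inf_le_right) _

theorem finrank_range_le_finrank_map_ker_add_finrank_range [FiniteDimensional K V]
    (f : V →ₗ[K] W) (g : V →ₗ[K] U) :
    finrank K (range f) ≤ finrank K ((ker g).map f) + finrank K (range g) := by
  obtain ⟨T, hT⟩ := (ker g).exists_isCompl
  have finrank_T : finrank K T = finrank K (range g) := by
    have := Submodule.finrank_add_eq_of_isCompl hT
    have := finrank_range_add_finrank_ker g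
    omega
  calc finrank K (range f)
      = finrank K ((ker g).map f ⊔ T.map f : Submodule K W) := by
        rw [← Submodule.map_sup, hT.sup_eq_top, Submodule.map_top]
    _ ≤ finrank K ((ker g).map f) + finrank K (T.map f) :=
        Submodule.finrank_add_le_finrank_add_finrank _ _
    _ ≤ finrank K ((ker g).map f) + finrank K (range g) := by
        rw [← finrank_T]
        gcongr
        exact Submodule.finrank_map_le f T

end LinearAlgebra

section Complex

variable {A : ℤ → Type} [∀ i, AddCommGroup (A i)] [∀ i, Module ℝ (A i)]
  {d : ∀ i, A i →ₗ[ℝ] A (i + 1)}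

theorem range_lcast_comp {i j : ℤ} (h : i + 1 = j + 1) :
    range ((lcast A h).comp (d i)) = range (d j) := by
  obtain rfl : i = j := add_right_cancel h
  rfl

theorem cobound_add_one (i : ℤ) : cobound A d (i + 1) = range (d i) :=
  range_lcast_comp _

theorem finrank_cobound {i j : ℤ} (h : i + 1 = j) :
    finrank ℝ (cobound A d j) = finrank ℝ (range (d i)) := by
  subst h
  rw [cobound_add_one]

theorem cobound_le_cocycles (hd : ∀ i, (d (i + 1)).comp (d i) = 0) (i : ℤ) :
    cobound A d i ≤ cocycles A d i := by
  obtain ⟨j, rfl⟩ : ∃ j, i = j + 1 := ⟨i - 1, (sub_add_cancel i 1).symm⟩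
  rw [cobound_add_one]
  exact range_le_ker_iff.mpr (hd j)

variable [∀ i, FiniteDimensional ℝ (A i)]

theorem mnum_eq_bnum_add_finrank_range (hd : ∀ i, (d (i + 1)).comp (d i) = 0)
    {j k : ℤ} (h : j + 1 = k) :
    mnum A k = bnum A d k + finrank ℝ (range (d j)) + finrank ℝ (range (d k)) := by
  have finrank_cocycles :
      bnum A d k + finrank ℝ (range (d j)) = finrank ℝ (cocycles A d k) := by
    rw [← finrank_cobound h, ← inf_eq_right.mpr (cobound_le_cocycles hd k)]
    exact finrank_quotient_comap_subtype_add_finrank_inf _ _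
  rw [finrank_cocycles, add_comm]
  exact (finrank_range_add_finrank_ker (d k)).symm

theorem vnum_le_rnum_add_finrank_range {ℓ : ℤ} (φ : ∀ i, A i →ₗ[ℝ] A (i + ℓ))
    {j k : ℤ} (h : j + 1 = k + ℓ) :
    vnum A ℓ φ k ≤
      rnum A d ℓ φ k + finrank ℝ (range (d j)) + finrank ℝ (range (d k)) :=
  calc vnum A ℓ φ k
      ≤ finrank ℝ ((cocycles A d k).map (φ k)) + finrank ℝ (range (d k)) :=
        finrank_range_le_finrank_map_ker_add_finrank_range (φ k) (d k)
    _ ≤ rnum A d ℓ φ k + finrank ℝ (range (d j)) + finrank ℝ (range (d k)) := by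
        rw [← finrank_cobound h]
        gcongr
        exact finrank_le_finrank_quotient_comap_subtype_add _ _

end Complex

end ConeMorse

/-- Here `rnum` is the dimension of the image of `φ(Z^k)` in `C^{k+ℓ} / B^{k+ℓ}`, which is the rank
of `[φ]` whenever `φ` commutes with `d` up to sign. -/
theorem rank_deviation_bound_general
    (ℓ : ℤ) (C : ℤ → Type) [∀ i, AddCommGroup (C i)] [∀ i, Module ℝ (C i)]
    [∀ i, FiniteDimensional ℝ (C i)]
    (d : ∀ i, C i →ₗ[ℝ] C (i + 1))
    (hd : ∀ i, (d (i + 1)).comp (d i) = 0)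
    (φ : ∀ i, C i →ₗ[ℝ] C (i + ℓ)) (k : ℤ) :
    ((vnum C ℓ φ (k - ℓ) : ℤ) - rnum C d ℓ φ (k - ℓ)) +
        ((vnum C ℓ φ (k - ℓ + 1) : ℤ) - rnum C d ℓ φ (k - ℓ + 1)) ≤
      ((mnum C k : ℤ) - bnum C d k) +
        ((mnum C (k - ℓ + 1) : ℤ) - bnum C d (k - ℓ + 1)) := by
  have vnum_bound := vnum_le_rnum_add_finrank_range (d := d) φ
    (show k - 1 + 1 = k - ℓ + ℓ by ring)
  have vnum_bound_succ := vnum_le_rnum_add_finrank_range (d := d) φ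
    (show k + 1 = k - ℓ + 1 + ℓ by ring)
  have mnum_eq := mnum_eq_bnum_add_finrank_range hd (sub_add_cancel k 1)
  have mnum_eq_shift := mnum_eq_bnum_add_finrank_range hd (rfl : k - ℓ + 1 = k - ℓ + 1)
  lia

/-- STATEMENT 10: for every integer `k ≥ 0`,
`(v_{k−ℓ} − r_{k−ℓ}) + (v_{k−ℓ+1} − r_{k−ℓ+1}) ≤ (m_k − b_k) + (m_{k−ℓ+1} − b_{k−ℓ+1})`. -/
theorem rank_deviation_bound
    (n ℓ : ℤ) (hn : 0 ≤ n) (hℓ : 1 ≤ ℓ)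
    (C : ℤ → Type) [∀ i, AddCommGroup (C i)] [∀ i, Module ℝ (C i)]
    [∀ i, FiniteDimensional ℝ (C i)]
    (hC : ∀ i, i < 0 ∨ n < i → Subsingleton (C i))
    (d : ∀ i, C i →ₗ[ℝ] C (i + 1))
    (hd : ∀ i, (d (i + 1)).comp (d i) = 0)
    (φ : ∀ i, C i →ₗ[ℝ] C (i + ℓ))
    (hφ : ∀ i, (d (i + ℓ)).comp (φ i) =
      ((-1 : ℝ) ^ ℓ) • (lcast C (show i + 1 + ℓ = i + ℓ + 1 by ring)).comp
        ((φ (i + 1)).comp (d i))) :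
    ∀ k : ℤ, 0 ≤ k →
      ((vnum C ℓ φ (k - ℓ) : ℤ) - rnum C d ℓ φ (k - ℓ)) +
          ((vnum C ℓ φ (k - ℓ + 1) : ℤ) - rnum C d ℓ φ (k - ℓ + 1)) ≤
        ((mnum C k : ℤ) - bnum C d k) +
          ((mnum C (k - ℓ + 1) : ℤ) - bnum C d (k - ℓ + 1)) :=
  fun k _ => rank_deviation_bound_general ℓ C d hd φ k
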